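/- Let c₁, c₂ ∈ ℝ and let H : ℝ³ → ℝ³ be a C² vector field with compact support satisfying, for all y ∈ ℝ³, c₁ H(y) + c₂ (y·∇)H(y) + (∇×((∇×H)×H))(y) = 0. Then (c₁ − (3/2)c₂) ∫_{ℝ³} |H(y)|² dy = 0. In particular, if c₁ ≠ (3/2)c₂ then H ≡ 0. -/

import Mathlib

noncomputable section

open MeasureTheory Real Set
open scoped RealInnerProductSpace

abbrev R3 := EuclideanSpace ℝ (Fin 3)

def toR3 (v : Fin 3 → ℝ) : R3 := (WithLp.equiv 2 (Fin 3 → ℝ)).symm v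

/-- j-th partial derivative of a scalar function. -/
def pd (j : Fin 3) (f : R3 → ℝ) (x : R3) : ℝ :=
  fderiv ℝ f x (EuclideanSpace.single j 1)

/-- curl of a vector field on ℝ³. -/
def curl (F : R3 → R3) (x : R3) : R3 :=
  toR3 ![pd 1 (fun y => F y 2) x - pd 2 (fun y => F y 1) x,
         pd 2 (fun y => F y 0) x - pd 0 (fun y => F y 2) x,
         pd 0 (fun y => F y 1) x - pd 1 (fun y => F y 0) x]

/-- divergence of a vector field on ℝ³. -/
def divg (F : R3 → R3) (x : R3) : ℝ :=
  pd 0 (fun y => F y 0) x + pd 1 (fun y => F y 1) x + pd 2 (fun y => F y 2) x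

/-- cross product on ℝ³. -/
def cross (u v : R3) : R3 :=
  toR3 ![u 1 * v 2 - u 2 * v 1, u 2 * v 0 - u 0 * v 2, u 0 * v 1 - u 1 * v 0]

/-- the advective derivative (u·∇)v. -/
def adv (u v : R3 → R3) (x : R3) : R3 :=
  toR3 (fun i => ∑ j, u x j * pd j (fun y => v y i) x)

/-- B is a pointwise solution of resistivity-free electron MHD at time t. -/
def IsEMHDAt (B : ℝ → R3 → R3) (t : ℝ) (x : R3) : Prop :=
  deriv (fun τ => B τ x) t + curl (fun y => cross (curl (B t) y) (B t y)) x = 0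
    ∧ divg (B t) x = 0

/-!
Pair the equation with `H` and integrate. Since `2 ⟪H, (y·∇)H⟫ = (y·∇)|H|²` and
`div (|H|² y) = (y·∇)|H|² + 3 |H|²`, the advective term contributes `-(3/2) c₂ ∫ |H|²`. The curl is
formally self-adjoint because `div (F × G) = ⟪curl F, G⟫ - ⟪F, curl G⟫`, so the nonlinear term
contributes `∫ ⟪curl H, curl H × H⟫`, which vanishes by orthogonality of the cross product.
-/

section Divergence

variable {E : Type*} [NormedAddCommGroup E] [NormedSpace ℝ E]

theorem trace_fderiv_smul_id [FiniteDimensional ℝ E] {f : E → ℝ} {x : E}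
    (hf : DifferentiableAt ℝ f x) :
    LinearMap.trace ℝ E (fderiv ℝ (fun y => f y • y) x) =
      Module.finrank ℝ E * f x + fderiv ℝ f x x := by
  rw [fderiv_fun_smul hf differentiableAt_fun_id]
  simp [mul_comm]

theorem integrable_fderiv_apply {F : Type*} [NormedAddCommGroup F] [NormedSpace ℝ F]
    [MeasurableSpace E] [OpensMeasurableSpace E] {μ : Measure E} [IsFiniteMeasureOnCompacts μ]
    {f : E → F} (hf : ContDiff ℝ 1 f) (hs : HasCompactSupport f) {v : E → E} (hv : Continuous v) :
    Integrable (fun x => fderiv ℝ f x (v x)) μ :=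
  ((hf.continuous_fderiv one_ne_zero).clm_apply hv).integrable_of_hasCompactSupport
    ((hs.fderiv ℝ).mono fun x hx hzero => hx (by simp [hzero]))

variable [FiniteDimensional ℝ E] [MeasurableSpace E] [BorelSpace E] (μ : Measure E)
  [μ.IsAddHaarMeasure]

theorem integral_fderiv_apply_eq_zero {F : Type*} [NormedAddCommGroup F] [NormedSpace ℝ F]
    {f : E → F} (hf : ContDiff ℝ 1 f) (hs : HasCompactSupport f) (v : E) :
    ∫ x, fderiv ℝ f x v ∂μ = 0 := by
  have hf_integrable : Integrable f μ := hf.continuous.integrable_of_hasCompactSupport hs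
  have hderiv_integrable : Integrable (fun x => fderiv ℝ f x v) μ :=
    integrable_fderiv_apply hf hs continuous_const
  simpa using integral_smul_fderiv_eq_neg_fderiv_smul_of_integrable (μ := μ)
    (f := fun _ : E => (1 : ℝ)) (g := f) (v := v) (by simp) (by simpa using hderiv_integrable)
    (by simpa using hf_integrable) (fun _ _ => differentiableAt_const _)
    (fun x _ => hf.differentiable one_ne_zero x)

theorem integral_trace_fderiv_eq_zero {F : E → E} (hF : ContDiff ℝ 1 F)
    (hs : HasCompactSupport F) : ∫ x, LinearMap.trace ℝ E (fderiv ℝ F x) ∂μ = 0 := by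
  let b := Module.finBasis ℝ E
  let coord := fun i => (b.coord i).toContinuousLinearMap
  have hcomp : ∀ i, ContDiff ℝ 1 (fun x => coord i (F x)) := fun i => (coord i).contDiff.comp hF
  have hsupp : ∀ i, HasCompactSupport (fun x => coord i (F x)) := fun i =>
    hs.comp_left (map_zero (coord i))
  have htrace : ∀ x, LinearMap.trace ℝ E (fderiv ℝ F x) =
      ∑ i, fderiv ℝ (fun y => coord i (F y)) x (b i) := by
    intro x
    rw [LinearMap.trace_eq_matrix_trace ℝ b, Matrix.trace]
    refine Finset.sum_congr rfl fun i _ => ?_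
    have hchain : fderiv ℝ (fun y => coord i (F y)) x = (coord i).comp (fderiv ℝ F x) :=
      ((coord i).hasFDerivAt.comp x (hF.differentiable one_ne_zero x).hasFDerivAt).fderiv
    rw [hchain]
    simp [coord, LinearMap.toMatrix_apply]
  simp_rw [htrace]
  rw [integral_finsetSum]
  · exact Finset.sum_eq_zero fun i _ => integral_fderiv_apply_eq_zero μ (hcomp i) (hsupp i) (b i)
  · exact fun i _ => integrable_fderiv_apply (hcomp i) (hsupp i) continuous_const

theorem integral_fderiv_apply_self {f : E → ℝ} (hf : ContDiff ℝ 1 f) (hs : HasCompactSupport f) :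
    ∫ x, fderiv ℝ f x x ∂μ = -Module.finrank ℝ E * ∫ x, f x ∂μ := by
  have hf_integrable : Integrable f μ := hf.continuous.integrable_of_hasCompactSupport hs
  have hdiv := integral_trace_fderiv_eq_zero μ (hf.smul contDiff_id) (hs.smul_right (f' := id))
  have htrace := fun x => trace_fderiv_smul_id (hf.differentiable one_ne_zero x)
  simp only [Pi.smul_def', id, htrace] at hdiv
  rw [integral_add (hf_integrable.const_mul _) (integrable_fderiv_apply hf hs continuous_id'),
    integral_const_mul] at hdiv
  linarith

theorem integral_inner_fderiv_apply_self {F : Type*} [NormedAddCommGroup F]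
    [InnerProductSpace ℝ F] {f : E → F} (hf : ContDiff ℝ 1 f) (hs : HasCompactSupport f) :
    ∫ x, ⟪f x, fderiv ℝ f x x⟫ ∂μ = -(Module.finrank ℝ E / 2) * ∫ x, ‖f x‖ ^ 2 ∂μ := by
  have hfderiv : ∀ x, fderiv ℝ (fun y => ‖f y‖ ^ 2) x x = 2 * ⟪f x, fderiv ℝ f x x⟫ := fun x => by
    rw [(hf.differentiable one_ne_zero x).hasFDerivAt.norm_sq.fderiv]
    simp
  have hEuler := integral_fderiv_apply_self μ (hf.norm_sq ℝ)
    (hs.comp_left (g := (‖·‖ ^ 2)) (by simp))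
  simp only [hfderiv, integral_const_mul] at hEuler
  linarith

end Divergence

section VectorCalculus

theorem real_inner_fin_three (u v : R3) : ⟪u, v⟫ = u 0 * v 0 + u 1 * v 1 + u 2 * v 2 := by
  simp [PiLp.inner_apply, Fin.sum_univ_three, mul_comm]

theorem inner_self_cross (u v : R3) : ⟪u, cross u v⟫ = 0 := by
  simp only [real_inner_fin_three, cross, toR3, WithLp.equiv_symm_apply_ofLp, Matrix.cons_val]
  ring

theorem cross_zero_left (v : R3) : cross 0 v = 0 := by
  ext i; fin_cases i <;> simp [cross, toR3]

theorem pd_mul (j : Fin 3) {f g : R3 → ℝ} {x : R3} (hf : DifferentiableAt ℝ f x)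
    (hg : DifferentiableAt ℝ g x) :
    pd j (fun y => f y * g y) x = f x * pd j g x + g x * pd j f x := by
  simp [pd, fderiv_fun_mul hf hg]

theorem pd_sub (j : Fin 3) {f g : R3 → ℝ} {x : R3} (hf : DifferentiableAt ℝ f x)
    (hg : DifferentiableAt ℝ g x) :
    pd j (fun y => f y - g y) x = pd j f x - pd j g x := by
  simp [pd, fderiv_fun_sub hf hg]

theorem pd_coord_eq_fderiv_apply (i j : Fin 3) {F : R3 → R3} {x : R3}
    (hF : DifferentiableAt ℝ F x) :
    pd j (fun y => F y i) x = fderiv ℝ F x (EuclideanSpace.single j 1) i := by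
  have hcoord := (EuclideanSpace.proj i : R3 →L[ℝ] ℝ).hasFDerivAt.comp x hF.hasFDerivAt
  exact congrArg (fun L : R3 →L[ℝ] ℝ => L (EuclideanSpace.single j 1)) hcoord.fderiv

theorem adv_eq_fderiv_apply (u : R3 → R3) {F : R3 → R3} {x : R3} (hF : DifferentiableAt ℝ F x) :
    adv u F x = fderiv ℝ F x (u x) := by
  have hbasis : u x = ∑ j, u x j • EuclideanSpace.single j (1 : ℝ) := by
    simpa using ((EuclideanSpace.basisFun (Fin 3) ℝ).sum_repr (u x)).symm
  ext i
  conv_rhs => rw [hbasis, map_sum]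
  simp [adv, toR3, pd_coord_eq_fderiv_apply i _ hF]

theorem divg_eq_trace_fderiv {F : R3 → R3} {x : R3} (hF : DifferentiableAt ℝ F x) :
    divg F x = LinearMap.trace ℝ R3 (fderiv ℝ F x) := by
  rw [LinearMap.trace_eq_matrix_trace ℝ (EuclideanSpace.basisFun (Fin 3) ℝ).toBasis, Matrix.trace,
    Fin.sum_univ_three]
  simp [divg, pd_coord_eq_fderiv_apply _ _ hF, LinearMap.toMatrix_apply]

theorem integral_divg_eq_zero {F : R3 → R3} (hF : ContDiff ℝ 1 F) (hs : HasCompactSupport F) :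
    ∫ x, divg F x = 0 := by
  simpa only [divg_eq_trace_fderiv (hF.differentiable one_ne_zero _)] using
    integral_trace_fderiv_eq_zero volume hF hs

theorem contDiff_pd {n : WithTop ℕ∞} (j : Fin 3) {f : R3 → ℝ} (hf : ContDiff ℝ (n + 1) f) :
    ContDiff ℝ n (pd j f) :=
  (hf.fderiv_right le_rfl).clm_apply contDiff_const

theorem contDiff_cross {n : WithTop ℕ∞} {F G : R3 → R3} (hF : ContDiff ℝ n F)
    (hG : ContDiff ℝ n G) : ContDiff ℝ n (fun x => cross (F x) (G x)) := by
  have hF' := contDiff_euclidean.1 hF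
  have hG' := contDiff_euclidean.1 hG
  refine contDiff_euclidean.2 fun i => ?_
  fin_cases i <;> exact ((hF' _).mul (hG' _)).sub ((hF' _).mul (hG' _))

theorem contDiff_curl {n : WithTop ℕ∞} {F : R3 → R3} (hF : ContDiff ℝ (n + 1) F) :
    ContDiff ℝ n (curl F) := by
  have hpd := fun i j => contDiff_pd j (contDiff_euclidean.1 hF i)
  refine contDiff_euclidean.2 fun i => ?_
  fin_cases i <;> exact (hpd _ _).sub (hpd _ _)

theorem hasCompactSupport_curl {F : R3 → R3} (hs : HasCompactSupport F) :
    HasCompactSupport (curl F) := by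
  refine HasCompactSupport.intro hs fun x hx => ?_
  have hpd : ∀ i j, pd j (fun y => F y i) x = 0 := fun i j => by
    have hzero : (fun y => F y i) =ᶠ[nhds x] 0 :=
      (notMem_tsupport_iff_eventuallyEq.1 hx).mono fun y hy => by simp [hy]
    simp [pd, hzero.fderiv_eq]
  ext i
  fin_cases i <;> simp [curl, toR3, hpd]

theorem divg_cross {F G : R3 → R3} {x : R3} (hF : DifferentiableAt ℝ F x)
    (hG : DifferentiableAt ℝ G x) :
    divg (fun y => cross (F y) (G y)) x = ⟪curl F x, G x⟫ - ⟪F x, curl G x⟫ := by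
  have hF' := differentiableAt_euclidean.1 hF
  have hG' := differentiableAt_euclidean.1 hG
  have hpd : ∀ i j k, pd k (fun y => F y i * G y j - F y j * G y i) x =
      F x i * pd k (fun y => G y j) x + G x j * pd k (fun y => F y i) x -
        (F x j * pd k (fun y => G y i) x + G x i * pd k (fun y => F y j) x) := fun i j k => by
    rw [pd_sub k ((hF' i).fun_mul (hG' j)) ((hF' j).fun_mul (hG' i)), pd_mul k (hF' i) (hG' j),
      pd_mul k (hF' j) (hG' i)]
  simp only [divg, cross, curl, real_inner_fin_three, toR3, WithLp.equiv_symm_apply_ofLp,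
    Matrix.cons_val, hpd]
  ring

theorem integrable_inner_curl {F G : R3 → R3} (hF : Continuous F) (hs : HasCompactSupport F)
    (hG : ContDiff ℝ 1 G) : Integrable (fun x => ⟪F x, curl G x⟫) :=
  (hF.inner (contDiff_curl (n := 0) hG).continuous).integrable_of_hasCompactSupport
    (hs.mono fun x hx hzero => hx (by simp [hzero]))

theorem integral_inner_curl {F G : R3 → R3} (hF : ContDiff ℝ 1 F) (hs : HasCompactSupport F)
    (hG : ContDiff ℝ 1 G) : ∫ x, ⟪F x, curl G x⟫ = ∫ x, ⟪curl F x, G x⟫ := by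
  have hcurl_integrable : Integrable (fun x => ⟪curl F x, G x⟫) :=
    ((contDiff_curl (n := 0) hF).continuous.inner hG.continuous).integrable_of_hasCompactSupport
      ((hasCompactSupport_curl hs).mono fun x hx hzero => hx (by simp [hzero]))
  have hdiv := integral_divg_eq_zero (contDiff_cross hF hG)
    (hs.mono fun x hx hzero => hx (by simp [hzero, cross_zero_left]))
  simp only [divg_cross (hF.differentiable one_ne_zero _) (hG.differentiable one_ne_zero _)]
    at hdiv
  rw [integral_sub hcurl_integrable (integrable_inner_curl hF.continuous hs hG)] at hdiv
  linarith

theorem integral_inner_adv_id {F : R3 → R3} (hF : ContDiff ℝ 1 F) (hs : HasCompactSupport F) :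
    ∫ x, ⟪F x, adv id F x⟫ = -(3 / 2) * ∫ x, ‖F x‖ ^ 2 := by
  simpa [adv_eq_fderiv_apply id (hF.differentiable one_ne_zero _)] using
    integral_inner_fderiv_apply_self volume hF hs

theorem integral_inner_curl_cross_curl_self {F : R3 → R3} (hF : ContDiff ℝ 2 F)
    (hs : HasCompactSupport F) : ∫ x, ⟪F x, curl (fun y => cross (curl F y) (F y)) x⟫ = 0 := by
  have hF₁ : ContDiff ℝ 1 F := hF.of_le one_le_two
  rw [integral_inner_curl hF₁ hs (contDiff_cross (contDiff_curl hF) hF₁)]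
  simp only [inner_self_cross, integral_zero]

end VectorCalculus

/-- energy identity for the profile equation of pseudo-self-similar
solutions. -/
theorem profile_energy_identity (c₁ c₂ : ℝ) (H : R3 → R3) (hH : ContDiff ℝ 2 H)
    (hsupp : HasCompactSupport H)
    (heq : ∀ y : R3,
      c₁ • H y + c₂ • (toR3 fun i => ∑ j, y j * pd j (fun z => H z i) y)
        + curl (fun z => cross (curl H z) (H z)) y = 0) :
    (c₁ - (3 / 2) * c₂) * ∫ y : R3, ‖H y‖ ^ 2 = 0 := by
  have hH₁ : ContDiff ℝ 1 H := hH.of_le one_le_two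
  have hprofile : ∀ y,
      c₁ • H y + c₂ • adv id H y + curl (fun z => cross (curl H z) (H z)) y = 0 := heq
  have henergy : ∀ y, c₁ * ‖H y‖ ^ 2 + ⟪H y, curl (fun z => cross (curl H z) (H z)) y⟫ =
      -c₂ * ⟪H y, adv id H y⟫ := fun y => by
    have hinner := congrArg (⟪H y, ·⟫) (hprofile y)
    simp only [inner_add_right, real_inner_smul_right, real_inner_self_eq_norm_sq,
      inner_zero_right] at hinner
    linear_combination hinner
  have hnorm : Integrable (fun y => ‖H y‖ ^ 2) :=
    Continuous.integrable_of_hasCompactSupport (by fun_prop)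
      (hsupp.comp_left (f := H) (g := (‖·‖ ^ 2)) (by simp))
  have hcurl := integrable_inner_curl hH.continuous hsupp
    (contDiff_cross (contDiff_curl hH) hH₁)
  have hintegral := integral_congr_ae (μ := volume) (.of_forall henergy)
  rw [integral_add (hnorm.const_mul c₁) hcurl, integral_const_mul, integral_const_mul,
    integral_inner_curl_cross_curl_self hH hsupp, integral_inner_adv_id hH₁ hsupp] at hintegral
  linarith
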